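/- Let λ > 0 and q₋ < x₀ < 0. As ε → 0⁺, the conditional law Law[τ_ε − (1/λ)·ln(1/ε) | C_ε] converges weakly to the law of (1/(2λ))·ln(x₀²·λ) + (1/(2λ))·Z, where Z is a standard Gumbel random variable. -/

import Mathlib

open MeasureTheory ProbabilityTheory Filter Topology Set

/-- `B` is a standard Brownian motion (for times `t ≥ 0`) on the probability space `(Ω, P)`. -/
def IsBrownianMotion {Ω : Type*} [MeasurableSpace Ω] (P : Measure Ω) (B : ℝ → Ω → ℝ) : Prop :=
  (∀ t : ℝ, Measurable (B t)) ∧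
  (∀ᵐ ω ∂P, B 0 ω = 0 ∧ ContinuousOn (fun t => B t ω) (Set.Ici (0 : ℝ))) ∧
  (∀ s t : ℝ, 0 ≤ s → s ≤ t →
    Measure.map (fun ω => B t ω - B s ω) P = gaussianReal 0 (Real.toNNReal (t - s))) ∧
  (∀ t : ℕ → ℝ, Monotone t → (∀ i, 0 ≤ t i) →
    iIndepFun (fun i ω => B (t (i + 1)) ω - B (t i) ω) P)

/-- The upper tail `P(N > y)` of a standard normal random variable. -/
noncomputable def gaussianTail (y : ℝ) : ℝ := (gaussianReal 0 1).real (Ioi y)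

lemma gaussianTail_nonneg (y : ℝ) : 0 ≤ gaussianTail y := measureReal_nonneg

lemma gaussianTail_antitone : Antitone gaussianTail := fun _ _ h =>
  measureReal_mono (Ioi_subset_Ioi h)

lemma gaussianTail_eq_integral (y : ℝ) :
    gaussianTail y = ∫ x in Ioi y, gaussianPDFReal 0 1 x := by
  rw [gaussianTail, measureReal_def, gaussianReal_apply_eq_integral _ one_ne_zero,
    ENNReal.toReal_ofReal]
  exact setIntegral_nonneg measurableSet_Ioi fun x _ => gaussianPDFReal_nonneg _ _ _

lemma continuous_gaussianPDFReal_zero_one : Continuous (gaussianPDFReal 0 1) := by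
  rw [gaussianPDFReal_def]
  fun_prop

lemma hasDerivAt_gaussianTail (y : ℝ) :
    HasDerivAt gaussianTail (-gaussianPDFReal 0 1 y) y := by
  have hpdf := integrable_gaussianPDFReal 0 1
  have h : gaussianTail = fun y =>
      (∫ x in Ioi 0, gaussianPDFReal 0 1 x) - ∫ x in (0 : ℝ)..y, gaussianPDFReal 0 1 x := by
    ext y
    rw [gaussianTail_eq_integral,
      ← intervalIntegral.integral_Ioi_sub_Ioi' hpdf.integrableOn hpdf.integrableOn]
    ring
  rw [h]
  exact (continuous_gaussianPDFReal_zero_one.integral_hasStrictDerivAt 0 y).hasDerivAt.const_sub _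

lemma continuous_gaussianTail : Continuous gaussianTail :=
  continuous_iff_continuousAt.2 fun y => (hasDerivAt_gaussianTail y).continuousAt

lemma tendsto_gaussianTail_atTop : Tendsto gaussianTail atTop (𝓝 0) := by
  have h : ∀ y, gaussianTail y = 1 - cdf (gaussianReal 0 1) y := fun y => by
    rw [cdf_eq_real, gaussianTail, ← compl_Iic, probReal_compl_eq_one_sub measurableSet_Iic]
  simp_rw [funext h]
  simpa using (tendsto_cdf_atTop (gaussianReal 0 1)).const_sub 1

lemma hasDerivAt_gaussianPDFReal_zero_one (y : ℝ) :
    HasDerivAt (gaussianPDFReal 0 1) (-y * gaussianPDFReal 0 1 y) y := by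
  rw [gaussianPDFReal_def]
  have h : HasDerivAt (fun x : ℝ => -(x - 0) ^ 2 / (2 * ((1 : NNReal) : ℝ))) (-y) y := by
    convert! ((((hasDerivAt_id y).sub_const 0).pow 2).neg.div_const
      (2 * ((1 : NNReal) : ℝ))) using 1
    simp
    ring
  convert! (h.exp.const_mul ((Real.sqrt (2 * Real.pi * ((1 : NNReal) : ℝ)))⁻¹)) using 1
  ring

lemma tendsto_gaussianPDFReal_zero_one_atTop :
    Tendsto (gaussianPDFReal 0 1) atTop (𝓝 0) := by
  rw [gaussianPDFReal_def, ← mul_zero ((Real.sqrt (2 * Real.pi * ((1 : NNReal) : ℝ)))⁻¹)]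
  refine Tendsto.const_mul _ (Real.tendsto_exp_atBot.comp ?_)
  have h : Tendsto (fun x : ℝ => x ^ 2 / 2) atTop atTop :=
    (tendsto_pow_atTop two_ne_zero).atTop_div_const two_pos
  refine (tendsto_neg_atTop_atBot.comp h).congr fun x => ?_
  simp
  ring

/-- Mills' asymptotics for the Gaussian tail. -/
lemma tendsto_gaussianTail_div :
    Tendsto (fun y => gaussianTail y / (gaussianPDFReal 0 1 y / y)) atTop (𝓝 1) := by
  have hpos : ∀ y, 0 < gaussianPDFReal 0 1 y := fun y => gaussianPDFReal_pos _ _ _ one_ne_zero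
  refine HasDerivAt.lhopital_zero_atTop (f' := fun y => -gaussianPDFReal 0 1 y)
    (g' := fun y => -gaussianPDFReal 0 1 y * (1 + (y ^ 2)⁻¹))
    (Eventually.of_forall hasDerivAt_gaussianTail) ?_ ?_ tendsto_gaussianTail_atTop ?_ ?_
  · filter_upwards [eventually_gt_atTop 0] with y hy
    convert! (hasDerivAt_gaussianPDFReal_zero_one y).div (hasDerivAt_id y) hy.ne' using 1
    simp only [id]
    field_simp
    ring
  · filter_upwards [eventually_gt_atTop 0] with y hy
    have := hpos y
    exact mul_ne_zero (by linarith) (by positivity)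
  · simpa [div_eq_mul_inv] using tendsto_gaussianPDFReal_zero_one_atTop.mul tendsto_inv_atTop_zero
  · have h : Tendsto (fun y : ℝ => (1 + (y ^ 2)⁻¹)⁻¹) atTop (𝓝 1) := by
      have := (tendsto_inv_atTop_zero.comp (tendsto_pow_atTop (α := ℝ) two_ne_zero)).const_add 1
      simpa using this.inv₀ (by simp)
    refine h.congr fun y => ?_
    have := (hpos y).ne'
    rw [div_mul_eq_div_div, div_self (by simpa using this), one_div]

lemma gaussianTail_pos (y : ℝ) : 0 < gaussianTail y := by
  refine (gaussianTail_nonneg y).lt_of_ne' fun h => ?_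
  have h1 := (tendsto_gaussianTail_div.eventually (lt_mem_nhds one_pos)).and (eventually_ge_atTop y)
  obtain ⟨z, hz, hyz⟩ := h1.exists
  have : gaussianTail z = 0 :=
    le_antisymm (h ▸ gaussianTail_antitone hyz) (gaussianTail_nonneg z)
  simp [this] at hz

/-- The limit of a ratio of Gaussian tails is read off the ratio of their Mills equivalents. -/
lemma tendsto_gaussianTail_ratio {ι : Type*} {l : Filter ι} {y z : ι → ℝ} {ρ κ : ℝ}
    (hy : Tendsto y l atTop) (hz : Tendsto z l atTop)
    (hρ : Tendsto (fun i => z i / y i) l (𝓝 ρ))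
    (hκ : Tendsto (fun i => Real.exp (-(y i ^ 2 - z i ^ 2) / 2)) l (𝓝 κ)) :
    Tendsto (fun i => gaussianTail (y i) / gaussianTail (z i)) l (𝓝 (ρ * κ)) := by
  have h := ((tendsto_gaussianTail_div.comp hy).div (tendsto_gaussianTail_div.comp hz)
    one_ne_zero).mul (hρ.mul hκ)
  rw [div_one, one_mul] at h
  refine h.congr' ?_
  filter_upwards [hy.eventually_gt_atTop 0, hz.eventually_gt_atTop 0] with i hyi hzi
  have h1 : Real.exp (-(y i ^ 2 - z i ^ 2) / 2) =
      gaussianPDFReal 0 1 (y i) / gaussianPDFReal 0 1 (z i) := by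
    have hc : (Real.sqrt (2 * Real.pi * ((1 : NNReal) : ℝ)))⁻¹ ≠ 0 := by
      have := Real.pi_pos
      exact inv_ne_zero (Real.sqrt_pos.2 (by simpa using this)).ne'
    rw [gaussianPDFReal_def]
    simp only
    rw [mul_div_mul_left _ _ hc, ← Real.exp_sub]
    congr 1
    simp
    ring
  have hp := (gaussianPDFReal_pos 0 1 (y i) one_ne_zero).ne'
  have hq := (gaussianPDFReal_pos 0 1 (z i) one_ne_zero).ne'
  have ht := (gaussianTail_pos (z i)).ne'
  simp only [Function.comp, Pi.div_apply, h1]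
  field_simp

lemma gaussianReal_real_Ioi {v : ℝ} (hv : 0 < v) (y : ℝ) :
    (gaussianReal 0 v.toNNReal).real (Ioi y) = gaussianTail (y / √v) := by
  have h := gaussianReal_map_const_mul (μ := 0) (v := 1) (√v)
  have hs : 0 < √v := Real.sqrt_pos.2 hv
  have e : gaussianReal (√v * 0) (NNReal.mk (√v ^ 2) (sq_nonneg _) * 1) =
      gaussianReal 0 v.toNNReal := by
    congr 1
    · simp
    · ext
      simp [Real.sq_sqrt hv.le, hv.le]
  rw [← e, ← h, map_measureReal_apply (by fun_prop) measurableSet_Ioi, gaussianTail]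
  congr 1
  ext x
  simp [div_lt_iff₀ hs, mul_comm]

lemma gaussianReal_real_Ici {v : ℝ} (hv : 0 < v) (y : ℝ) :
    (gaussianReal 0 v.toNNReal).real (Ici y) = gaussianTail (y / √v) := by
  have := nullSingletonClass_gaussianReal (μ := 0) (v := v.toNNReal) (by simpa using hv)
  rw [← gaussianReal_real_Ioi hv]
  exact measureReal_congr Ioi_ae_eq_Ici.symm

lemma gaussianReal_real_Iio (v : NNReal) (y : ℝ) :
    (gaussianReal 0 v).real (Iio (-y)) = (gaussianReal 0 v).real (Ioi y) := by
  conv_rhs => rw [← neg_zero, ← gaussianReal_map_neg, map_measureReal_apply (by fun_prop)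
    measurableSet_Ioi]
  congr 1
  ext x
  simp

lemma half_le_gaussianReal_real_Ici (v : NNReal) :
    1 / 2 ≤ (gaussianReal 0 v).real (Ici 0) := by
  have h1 : (gaussianReal 0 v).real (Iio 0) ≤ (gaussianReal 0 v).real (Ici 0) := by
    have := gaussianReal_real_Iio v 0
    rw [neg_zero] at this
    rw [this]
    exact measureReal_mono Ioi_subset_Ici_self
  have h2 : (gaussianReal 0 v).real (Iio 0) = 1 - (gaussianReal 0 v).real (Ici 0) := by
    rw [← compl_Ici, probReal_compl_eq_one_sub measurableSet_Ici]
  linarith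

section RandomWalk

variable {Ω : Type*} {mΩ : MeasurableSpace Ω}

/-- The σ-algebra generated by the first `k` increments of the sequence `S`. -/
abbrev incrementHistory (S : ℕ → Ω → ℝ) (k : ℕ) : MeasurableSpace Ω :=
  ⨆ i ∈ Iio k, MeasurableSpace.comap (fun ω => S (i + 1) ω - S i ω) inferInstance

lemma measurable_increment_iSup (S : ℕ → Ω → ℝ) {I : Set ℕ} {i : ℕ} (hi : i ∈ I) :
    Measurable[⨆ i ∈ I, MeasurableSpace.comap (fun ω => S (i + 1) ω - S i ω) inferInstance]
      (fun ω => S (i + 1) ω - S i ω) := by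
  rw [measurable_iff_comap_le]
  exact le_iSup₂_of_le i hi le_rfl

lemma measurable_sub_iSup (S : ℕ → Ω → ℝ) {I : Set ℕ} {j k : ℕ} (hjk : j ≤ k)
    (hI : Ico j k ⊆ I) :
    Measurable[⨆ i ∈ I, MeasurableSpace.comap (fun ω => S (i + 1) ω - S i ω) inferInstance]
      (fun ω => S k ω - S j ω) := by
  induction k, hjk using Nat.le_induction with
  | base => simp
  | succ k hk ih =>
    have h1 := ih fun i hi => hI ⟨hi.1, hi.2.trans (Nat.lt_succ_self k)⟩
    have h2 := measurable_increment_iSup S (hI ⟨hk, Nat.lt_succ_self k⟩)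
    have := @Measurable.add _ _ _ _ _ (_) _ _ h1 h2
    convert! this using 2
    simp

lemma measurable_incrementHistory {S : ℕ → Ω → ℝ} (h0 : ∀ ω, S 0 ω = 0) {j k : ℕ} (hjk : j ≤ k) :
    Measurable[incrementHistory S k] (S j) := by
  have := measurable_sub_iSup S (I := Iio k) (Nat.zero_le j) fun i hi => hi.2.trans_le hjk
  simpa [h0] using this

lemma incrementHistory_mono (S : ℕ → Ω → ℝ) : Monotone (incrementHistory S) := fun _ _ h =>
  biSup_mono fun _ hi => lt_of_lt_of_le hi h

lemma incrementHistory_le {S : ℕ → Ω → ℝ} (hS : ∀ k, Measurable (S k)) (k : ℕ) :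
    incrementHistory S k ≤ mΩ :=
  iSup₂_le fun i _ => ((hS (i + 1)).sub (hS i)).comap_le

variable {P : Measure Ω} {S : ℕ → Ω → ℝ}

lemma measureReal_inter_increment (hS : ∀ k, Measurable (S k))
    (hind : iIndepFun (fun i ω => S (i + 1) ω - S i ω) P) {k n : ℕ} (hkn : k ≤ n)
    {A : Set Ω} (hA : MeasurableSet[incrementHistory S k] A) {V : Set ℝ} (hV : MeasurableSet V) :
    P.real (A ∩ {ω | S n ω - S k ω ∈ V}) = P.real A * P.real {ω | S n ω - S k ω ∈ V} := by
  have hi := indep_iSup_of_disjoint (fun i => ((hS (i + 1)).sub (hS i)).comap_le) hind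
    (S := Iio k) (T := Ici k) (by
      rw [Set.disjoint_left]
      intro i hi hi'
      exact absurd (mem_Iio.1 hi) (not_lt.2 (mem_Ici.1 hi')))
  have hD := measurable_sub_iSup S (I := Ici k) hkn (fun i hi => hi.1) hV
  have := (Indep_iff _ _ _).1 hi A _ hA hD
  simp only [measureReal_def, ← ENNReal.toReal_mul]
  exact congrArg _ this

variable [IsProbabilityMeasure P]

/-- Decomposition over the disjoint events `A k`, each decided by time `k` and followed by an
independent increment. -/
lemma measureReal_iUnion_inter_increment (hS : ∀ k, Measurable (S k))
    (hind : iIndepFun (fun i ω => S (i + 1) ω - S i ω) P) (n : ℕ)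
    {A : ℕ → Set Ω} (hA : ∀ k, MeasurableSet[incrementHistory S k] (A k))
    (hd : Pairwise (Function.onFun Disjoint A))
    {V : ℕ → Set ℝ} (hV : ∀ k, MeasurableSet (V k)) :
    P.real (⋃ k ∈ Finset.range (n + 1), A k ∩ {ω | S n ω - S k ω ∈ V k})
      = ∑ k ∈ Finset.range (n + 1), P.real (A k) * P.real {ω | S n ω - S k ω ∈ V k} := by
  rw [measureReal_biUnion_finset]
  · refine Finset.sum_congr rfl fun k hk => ?_
    exact measureReal_inter_increment hS hind (Nat.lt_succ_iff.1 (Finset.mem_range.1 hk)) (hA k)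
      (hV k)
  · intro i _ j _ hij
    exact (hd hij).mono inter_subset_left inter_subset_left
  · intro k _
    exact (incrementHistory_le hS k _ (hA k)).inter (((hS n).sub (hS k)) (hV k))

/-- The event that `k` is the first index for which `W k` occurs. -/
def firstEvent (W : ℕ → Set Ω) (k : ℕ) : Set Ω := {ω | ω ∈ W k ∧ ∀ i < k, ω ∉ W i}

lemma firstEvent_pairwise_disjoint (W : ℕ → Set Ω) :
    Pairwise (Function.onFun Disjoint (firstEvent W)) := by
  intro i j hij
  refine Set.disjoint_left.2 fun ω hi hj => ?_
  rcases lt_or_gt_of_ne hij with h | h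
  · exact hj.2 i h hi.1
  · exact hi.2 j h hj.1

lemma measurableSet_firstEvent {W : ℕ → Set Ω}
    (hW : ∀ k, MeasurableSet[incrementHistory S k] (W k)) (k : ℕ) :
    MeasurableSet[incrementHistory S k] (firstEvent W k) := by
  have h : firstEvent W k = W k ∩ ⋂ i ∈ Iio k, (W i)ᶜ := by
    ext ω
    simp [firstEvent]
  rw [h]
  refine MeasurableSet.inter (hW k) (MeasurableSet.biInter (to_countable _) fun i hi => ?_)
  exact (incrementHistory_mono S hi.le _ (hW i)).compl

lemma exists_mem_firstEvent {W : ℕ → Set Ω} {ω : Ω} {k : ℕ} (h : ω ∈ W k) :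
    ∃ i ≤ k, ω ∈ firstEvent W i := by
  classical
  have hex : ∃ k, ω ∈ W k := ⟨k, h⟩
  exact ⟨Nat.find hex, Nat.find_min' hex h, Nat.find_spec hex, fun i hi => Nat.find_min hex hi⟩

/-- Ottaviani's inequality. -/
lemma measureReal_exists_le_two_mul (hS : ∀ k, Measurable (S k))
    (hind : iIndepFun (fun i ω => S (i + 1) ω - S i ω) P) (n : ℕ)
    {W : ℕ → Set Ω} (hW : ∀ k, MeasurableSet[incrementHistory S k] (W k))
    (hhalf : ∀ k ≤ n, 1 / 2 ≤ P.real {ω | S n ω - S k ω ∈ Ici 0}) :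
    P.real {ω | ∃ k ≤ n, ω ∈ W k} ≤ 2 * P.real {ω | ∃ k ≤ n, ω ∈ W k ∧ S k ω ≤ S n ω} := by
  have hA := measurableSet_firstEvent hW
  have h1 := measureReal_iUnion_inter_increment hS hind n hA (firstEvent_pairwise_disjoint W)
    (V := fun _ => Ici 0) (fun _ => measurableSet_Ici)
  have h2 := measureReal_iUnion_inter_increment hS hind n hA (firstEvent_pairwise_disjoint W)
    (V := fun _ => univ) (fun _ => MeasurableSet.univ)
  have h3 : P.real {ω | ∃ k ≤ n, ω ∈ W k} ≤ P.real (⋃ k ∈ Finset.range (n + 1),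
      firstEvent W k ∩ {ω | S n ω - S k ω ∈ univ}) := by
    refine measureReal_mono ?_ (measure_ne_top _ _)
    rintro ω ⟨k, hk, hω⟩
    obtain ⟨i, hi, h⟩ := exists_mem_firstEvent hω
    simp only [mem_iUnion]
    exact ⟨i, Finset.mem_range.2 (by omega), h, trivial⟩
  have h4 : P.real (⋃ k ∈ Finset.range (n + 1), firstEvent W k ∩ {ω | S n ω - S k ω ∈ Ici 0})
      ≤ P.real {ω | ∃ k ≤ n, ω ∈ W k ∧ S k ω ≤ S n ω} := by
    refine measureReal_mono ?_
    intro ω hω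
    simp only [mem_iUnion, Finset.mem_range] at hω
    obtain ⟨k, hk, hω, h⟩ := hω
    exact ⟨k, by omega, hω.1, by simpa using h⟩
  have h5 : ∑ k ∈ Finset.range (n + 1), P.real (firstEvent W k) * P.real {ω | S n ω - S k ω ∈ univ}
      ≤ 2 * ∑ k ∈ Finset.range (n + 1),
        P.real (firstEvent W k) * P.real {ω | S n ω - S k ω ∈ Ici 0} := by
    rw [Finset.mul_sum]
    refine Finset.sum_le_sum fun k hk => ?_
    have := hhalf k (Nat.lt_succ_iff.1 (Finset.mem_range.1 hk))
    have h6 : P.real {ω | S n ω - S k ω ∈ univ} = 1 := by simp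
    rw [h6]
    nlinarith [measureReal_nonneg (μ := P) (s := firstEvent W k)]
  linarith

/-- If a walk must, after the first occurrence of `W`, make a jump that has probability at most
`c`, then this happens with probability at most `c`. -/
lemma measureReal_firstEvent_increment_le (hS : ∀ k, Measurable (S k))
    (hind : iIndepFun (fun i ω => S (i + 1) ω - S i ω) P) (n : ℕ)
    {W : ℕ → Set Ω} (hW : ∀ k, MeasurableSet[incrementHistory S k] (W k))
    {V : ℕ → Set ℝ} (hV : ∀ k, MeasurableSet (V k)) {c : ℝ}
    (hc : ∀ k ≤ n, P.real {ω | S n ω - S k ω ∈ V k} ≤ c) :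
    P.real {ω | ∃ k ≤ n, ω ∈ firstEvent W k ∧ S n ω - S k ω ∈ V k} ≤ c := by
  have hA := measurableSet_firstEvent hW
  have h1 := measureReal_iUnion_inter_increment hS hind n hA (firstEvent_pairwise_disjoint W) hV
  have h3 : {ω | ∃ k ≤ n, ω ∈ firstEvent W k ∧ S n ω - S k ω ∈ V k} =
      ⋃ k ∈ Finset.range (n + 1), firstEvent W k ∩ {ω | S n ω - S k ω ∈ V k} := by
    ext ω
    simp [and_left_comm]
  have hc0 : 0 ≤ c := measureReal_nonneg.trans (hc 0 (Nat.zero_le n))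
  have h4 : ∑ k ∈ Finset.range (n + 1), P.real (firstEvent W k) ≤ 1 := by
    rw [← measureReal_biUnion_finset (fun i _ j _ hij => firstEvent_pairwise_disjoint W hij)
      (fun k _ => incrementHistory_le hS k _ (hA k))]
    exact measureReal_le_one
  rw [h3, h1]
  calc _ ≤ ∑ k ∈ Finset.range (n + 1), P.real (firstEvent W k) * c := by
        refine Finset.sum_le_sum fun k hk => ?_
        exact mul_le_mul_of_nonneg_left (hc k (Nat.lt_succ_iff.1 (Finset.mem_range.1 hk)))
          measureReal_nonneg
    _ ≤ c := by
        rw [← Finset.sum_mul]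
        nlinarith

/-- Reflection at the first passage above `x`, with overshoot at most `δ`. -/
lemma measureReal_add_le_exists_lt (hS : ∀ k, Measurable (S k)) (h0 : ∀ ω, S 0 ω = 0)
    (hind : iIndepFun (fun i ω => S (i + 1) ω - S i ω) P) (n : ℕ) {x δ : ℝ} (hx : 0 ≤ x)
    (hδ : 0 ≤ δ)
    (hsymm : ∀ k ≤ n, P.real {ω | S n ω - S k ω ∈ Iio (-δ)} = P.real {ω | S n ω - S k ω ∈ Ioi δ}) :
    P.real {ω | x < S n ω} + P.real {ω | x + 2 * δ < S n ω}
      ≤ P.real {ω | ∃ k ≤ n, x < S k ω} + P.real {ω | ∃ k < n, δ < S (k + 1) ω - S k ω} := by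
  set W : ℕ → Set Ω := fun k => {ω | x < S k ω} with hWdef
  have hW : ∀ k, MeasurableSet[incrementHistory S k] (W k) := fun k =>
    measurable_incrementHistory h0 le_rfl measurableSet_Ioi
  set A : ℕ → Set Ω := fun k => firstEvent W k ∩ {ω | S k ω ≤ x + δ} with hAdef
  have hA : ∀ k, MeasurableSet[incrementHistory S k] (A k) := fun k =>
    MeasurableSet.inter (measurableSet_firstEvent hW k)
      (measurable_incrementHistory h0 le_rfl measurableSet_Iic)
  have hd : Pairwise (Function.onFun Disjoint A) := fun i j hij =>
    (firstEvent_pairwise_disjoint W hij).mono inter_subset_left inter_subset_left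
  have h1 := measureReal_iUnion_inter_increment hS hind n hA hd
    (V := fun _ => Iio (-δ)) (fun _ => measurableSet_Iio)
  have h2 := measureReal_iUnion_inter_increment hS hind n hA hd
    (V := fun _ => Ioi δ) (fun _ => measurableSet_Ioi)
  have h3 : P.real (⋃ k ∈ Finset.range (n + 1), A k ∩ {ω | S n ω - S k ω ∈ Iio (-δ)}) =
      P.real (⋃ k ∈ Finset.range (n + 1), A k ∩ {ω | S n ω - S k ω ∈ Ioi δ}) := by
    rw [h1, h2]
    refine Finset.sum_congr rfl fun k hk => ?_
    rw [hsymm k (Nat.lt_succ_iff.1 (Finset.mem_range.1 hk))]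
  have h4 : P.real {ω | x + 2 * δ < S n ω} ≤
      P.real (⋃ k ∈ Finset.range (n + 1), A k ∩ {ω | S n ω - S k ω ∈ Ioi δ}) +
        P.real {ω | ∃ k < n, δ < S (k + 1) ω - S k ω} := by
    refine (measureReal_mono ?_).trans (measureReal_union_le _ _)
    intro ω hω
    rw [mem_ofPred_eq] at hω
    by_cases hb : ∃ k < n, δ < S (k + 1) ω - S k ω
    · exact Or.inr hb
    left
    push Not at hb
    have hn : ω ∈ W n := by
      rw [hWdef, mem_ofPred_eq]
      linarith
    obtain ⟨k, hk, hfirst⟩ := exists_mem_firstEvent hn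
    have hk0 : x < S k ω := hfirst.1
    have hov : S k ω ≤ x + δ := by
      rcases k with _ | j
      · rw [h0] at hk0
        linarith
      · have ha := hb j (by omega)
        have hc : ¬ x < S j ω := hfirst.2 j (Nat.lt_succ_self j)
        linarith
    simp only [mem_iUnion]
    refine ⟨k, Finset.mem_range.2 (by omega), ⟨hfirst, hov⟩, ?_⟩
    simp only [mem_ofPred_eq, mem_Ioi]
    linarith
  have h5 : P.real {ω | x < S n ω} +
      P.real (⋃ k ∈ Finset.range (n + 1), A k ∩ {ω | S n ω - S k ω ∈ Iio (-δ)}) ≤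
        P.real {ω | ∃ k ≤ n, x < S k ω} := by
    rw [← measureReal_union (h₂ := measure_ne_top _ _)]
    · refine measureReal_mono ?_
      rintro ω (hω | hω)
      · exact ⟨n, le_rfl, hω⟩
      · simp only [mem_iUnion, Finset.mem_range] at hω
        obtain ⟨k, hk, hω, -⟩ := hω
        exact ⟨k, by omega, hω.1.1⟩
    · refine Set.disjoint_left.2 fun ω hω hω' => ?_
      simp only [mem_iUnion, Finset.mem_range] at hω'
      obtain ⟨k, hk, hω', h⟩ := hω'
      have ha : S k ω ≤ x + δ := hω'.2
      simp only [mem_ofPred_eq, mem_Iio] at h hω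
      linarith
    · refine Finset.measurableSet_biUnion _ fun k _ => ?_
      exact (incrementHistory_le hS k _ (hA k)).inter (((hS n).sub (hS k)) measurableSet_Iio)
  linarith

end RandomWalk

section BrownianMotion

variable {Ω : Type*} [MeasurableSpace Ω]

/-- A Brownian motion all of whose paths start at `0` and are continuous on the whole line. -/
structure IsRegularBrownianMotion (P : Measure Ω) (B : ℝ → Ω → ℝ) : Prop where
  measurable : ∀ t, Measurable (B t)
  zero : ∀ ω, B 0 ω = 0
  continuous : ∀ ω, Continuous fun t => B t ω
  law : ∀ s t : ℝ, 0 ≤ s → s ≤ t →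
    Measure.map (fun ω => B t ω - B s ω) P = gaussianReal 0 (Real.toNNReal (t - s))
  indep : ∀ t : ℕ → ℝ, Monotone t → (∀ i, 0 ≤ t i) →
    iIndepFun (fun i ω => B (t (i + 1)) ω - B (t i) ω) P

lemma measureReal_le_of_eventually_mem {P : Measure Ω} [IsFiniteMeasure P] {D : Set Ω}
    {E : ℕ → Set Ω} {c : ℝ} (hE : ∀ᶠ n in atTop, P.real (E n) ≤ c)
    (hD : ∀ ω ∈ D, ∀ᶠ n in atTop, ω ∈ E n) : P.real D ≤ c := by
  set F : ℕ → Set Ω := fun N => ⋂ n ≥ N, E n with hF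
  have hmono : Monotone F := fun M N h =>
    biInter_subset_biInter_left fun n (hn : N ≤ n) => h.trans hn
  have ht := (ENNReal.tendsto_toReal (measure_ne_top P _)).comp
    (tendsto_measure_iUnion_atTop (μ := P) hmono)
  have h1 : P.real D ≤ P.real (⋃ N, F N) := by
    refine measureReal_mono fun ω hω => ?_
    obtain ⟨N, hN⟩ := eventually_atTop.1 (hD ω hω)
    exact mem_iUnion.2 ⟨N, mem_iInter₂.2 hN⟩
  refine h1.trans (le_of_tendsto ht ?_)
  filter_upwards [hE] with n hn
  exact (measureReal_mono (biInter_subset_of_mem (le_refl n))).trans hn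

lemma tendsto_floor_grid {T : ℝ} (hT : 0 < T) {r : ℝ} (hr : 0 ≤ r) :
    Tendsto (fun n : ℕ => (⌊r / T * n⌋₊ : ℝ) * (T / n)) atTop (𝓝 r) := by
  have h := ((tendsto_nat_floor_mul_div_atTop (div_nonneg hr hT.le)).comp
    tendsto_natCast_atTop_atTop).mul_const T
  rw [div_mul_cancel₀ _ hT.ne'] at h
  refine h.congr fun n => ?_
  simp only [Function.comp]
  ring

lemma floor_grid_le {T : ℝ} (hT : 0 < T) {r : ℝ} (hr : r ≤ T) (n : ℕ) : ⌊r / T * n⌋₊ ≤ n := by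
  refine Nat.floor_le_of_le ?_
  exact mul_le_of_le_one_left (Nat.cast_nonneg n) ((div_le_one hT).2 hr)

namespace IsRegularBrownianMotion

variable {P : Measure Ω} {B : ℝ → Ω → ℝ}

lemma measureReal_increment (hB : IsRegularBrownianMotion P B) {s t : ℝ} (hs : 0 ≤ s) (hst : s ≤ t)
    {V : Set ℝ} (hV : MeasurableSet V) :
    P.real {ω | B t ω - B s ω ∈ V} = (gaussianReal 0 (Real.toNNReal (t - s))).real V := by
  have hm : Measurable fun ω => B t ω - B s ω := (hB.measurable t).sub (hB.measurable s)
  rw [← hB.law s t hs hst, map_measureReal_apply hm hV]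
  rfl

lemma measureReal_lt (hB : IsRegularBrownianMotion P B) {s : ℝ} (hs : 0 < s) (x : ℝ) :
    P.real {ω | x < B s ω} = gaussianTail (x / √s) := by
  have := hB.measureReal_increment le_rfl hs.le (measurableSet_Ioi (a := x))
  rw [sub_zero, gaussianReal_real_Ioi hs] at this
  simpa [hB.zero] using this

lemma measureReal_ge (hB : IsRegularBrownianMotion P B) {s : ℝ} (hs : 0 < s) (x : ℝ) :
    P.real {ω | x ≤ B s ω} = gaussianTail (x / √s) := by
  have := hB.measureReal_increment le_rfl hs.le (measurableSet_Ici (a := x))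
  rw [sub_zero, gaussianReal_real_Ici hs] at this
  simpa [hB.zero] using this

lemma indep_grid (hB : IsRegularBrownianMotion P B) {h : ℝ} (hh : 0 ≤ h) :
    iIndepFun (fun (i : ℕ) ω => B ((i + 1 : ℕ) * h) ω - B (i * h) ω) P :=
  hB.indep (fun i => i * h) (fun i j hij => by
    have : (i : ℝ) ≤ j := by exact_mod_cast hij
    simp only
    gcongr) fun i => by positivity

lemma half_le_increment (hB : IsRegularBrownianMotion P B) {h : ℝ} (hh : 0 ≤ h) {k n : ℕ}
    (hk : k ≤ n) : 1 / 2 ≤ P.real {ω | B (n * h) ω - B (k * h) ω ∈ Ici 0} := by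
  rw [hB.measureReal_increment (by positivity) (by gcongr) measurableSet_Ici]
  exact half_le_gaussianReal_real_Ici _

variable [IsProbabilityMeasure P]

lemma measureReal_exists_ge_le (hB : IsRegularBrownianMotion P B) {s : ℝ} (hs : 0 < s) (x : ℝ) :
    P.real {ω | ∃ r, 0 ≤ r ∧ r ≤ s ∧ x ≤ B r ω} ≤ 2 * gaussianTail (x / √s) := by
  have key : ∀ y < x, P.real {ω | ∃ r, 0 ≤ r ∧ r ≤ s ∧ x ≤ B r ω} ≤ 2 * gaussianTail (y / √s) := by
    intro y hy
    refine measureReal_le_of_eventually_mem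
      (E := fun n : ℕ => {ω | ∃ k ≤ n, y ≤ B (k * (s / n)) ω}) ?_ ?_
    · filter_upwards [eventually_gt_atTop 0] with n hn
      have hn' : (n : ℝ) ≠ 0 := by exact_mod_cast hn.ne'
      have hh : 0 ≤ s / n := by positivity
      have h := measureReal_exists_le_two_mul (S := fun (k : ℕ) => B (k * (s / n)))
        (fun k => hB.measurable _) (hB.indep_grid hh) n (W := fun k => {ω | y ≤ B (k * (s / n)) ω})
        (fun k => measurable_incrementHistory (S := fun (k : ℕ) => B (k * (s / n)))
          (by simp [hB.zero]) (le_refl k) measurableSet_Ici)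
        (fun k hk => hB.half_le_increment hh hk)
      refine h.trans ?_
      rw [← hB.measureReal_ge hs]
      refine mul_le_mul_of_nonneg_left (measureReal_mono ?_) zero_le_two
      rintro ω ⟨k, hk, h1, h2⟩
      rw [mul_div_cancel₀ _ hn'] at h2
      exact le_trans h1 h2
    · rintro ω ⟨r, hr0, hrs, hx⟩
      have ht := ((hB.continuous ω).tendsto r).comp (tendsto_floor_grid hs hr0)
      filter_upwards [ht.eventually (lt_mem_nhds (hy.trans_le hx))] with n hn
      exact ⟨_, floor_grid_le hs hrs n, hn.le⟩
  have hcont : Tendsto (fun y => 2 * gaussianTail (y / √s)) (𝓝[<] x)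
      (𝓝 (2 * gaussianTail (x / √s))) := by
    refine Tendsto.mono_left ?_ nhdsWithin_le_nhds
    exact (continuous_const.mul (continuous_gaussianTail.comp (by fun_prop))).tendsto x
  exact ge_of_tendsto hcont (by filter_upwards [self_mem_nhdsWithin] with y hy using key y hy)

lemma tendsto_measureReal_big_step (hB : IsRegularBrownianMotion P B) {s δ : ℝ} (hs : 0 < s)
    (hδ : 0 < δ) :
    Tendsto (fun n : ℕ => P.real {ω | ∃ k < n, δ < B ((k + 1 : ℕ) * (s / n)) ω - B (k * (s / n)) ω})
      atTop (𝓝 0) := by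
  have h := tendsto_measure_of_tendsto_indicator_of_isFiniteMeasure (A := ∅) atTop P
    (As := fun n : ℕ => {ω | ∃ k < n, δ < B ((k + 1 : ℕ) * (s / n)) ω - B (k * (s / n)) ω}) ?_ ?_
  · have := (ENNReal.tendsto_toReal (measure_ne_top P _)).comp h
    simpa [Function.comp_def, measureReal_def] using this
  · intro n
    have : {ω | ∃ k < n, δ < B ((k + 1 : ℕ) * (s / n)) ω - B (k * (s / n)) ω} =
        ⋃ k ∈ Iio n, {ω | δ < B ((k + 1 : ℕ) * (s / n)) ω - B (k * (s / n)) ω} := by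
      ext ω
      simp
    rw [this]
    exact MeasurableSet.biUnion (to_countable _) fun k _ =>
      measurableSet_lt measurable_const ((hB.measurable _).sub (hB.measurable _))
  · intro ω
    have huc := (isCompact_Icc (a := (0 : ℝ)) (b := s)).uniformContinuousOn_of_continuous
      (hB.continuous ω).continuousOn
    obtain ⟨η, hη, huc⟩ := Metric.uniformContinuousOn_iff.1 huc δ hδ
    have hlim : Tendsto (fun n : ℕ => s / n) atTop (𝓝 0) :=
      tendsto_const_div_atTop_nhds_zero_nat s
    filter_upwards [hlim.eventually (gt_mem_nhds hη), eventually_gt_atTop 0] with n hn hn0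
    have hn' : (0 : ℝ) < n := by exact_mod_cast hn0
    have hgrid : ∀ k ≤ n, (k : ℝ) * (s / n) ∈ Icc 0 s := fun k hk => by
      have hk' : (k : ℝ) ≤ n := by exact_mod_cast hk
      refine ⟨by positivity, ?_⟩
      calc (k : ℝ) * (s / n) ≤ n * (s / n) := by gcongr
        _ = s := mul_div_cancel₀ _ hn'.ne'
    refine iff_of_false ?_ (notMem_empty ω)
    rintro ⟨k, hk, hlt⟩
    have hd := huc _ (hgrid (k + 1) hk) _ (hgrid k hk.le) (by
      rw [Real.dist_eq, ← sub_mul, Nat.cast_add, Nat.cast_one, add_sub_cancel_left, one_mul,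
        abs_of_pos (by positivity)]
      exact hn)
    rw [Real.dist_eq] at hd
    linarith [le_abs_self (B ((k + 1 : ℕ) * (s / n)) ω - B (k * (s / n)) ω)]

lemma le_measureReal_exists_ge (hB : IsRegularBrownianMotion P B) {s x : ℝ} (hs : 0 < s)
    (hx : 0 ≤ x) :
    2 * gaussianTail (x / √s) ≤ P.real {ω | ∃ r, 0 ≤ r ∧ r ≤ s ∧ x ≤ B r ω} := by
  have key : ∀ δ > 0, gaussianTail (x / √s) + gaussianTail ((x + 2 * δ) / √s) ≤
      P.real {ω | ∃ r, 0 ≤ r ∧ r ≤ s ∧ x ≤ B r ω} := by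
    intro δ hδ
    have hlim := (hB.tendsto_measureReal_big_step hs hδ).const_add
      (P.real {ω | ∃ r, 0 ≤ r ∧ r ≤ s ∧ x ≤ B r ω})
    rw [add_zero] at hlim
    refine ge_of_tendsto hlim ?_
    filter_upwards [eventually_gt_atTop 0] with n hn
    have hn' : (0 : ℝ) < n := by exact_mod_cast hn
    have hh : 0 ≤ s / n := by positivity
    have h := measureReal_add_le_exists_lt (S := fun (k : ℕ) => B (k * (s / n)))
      (fun k => hB.measurable _) (by simp [hB.zero]) (hB.indep_grid hh) n hx hδ.le
      (fun k hk => by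
        rw [hB.measureReal_increment (by positivity) (by gcongr) measurableSet_Iio,
          hB.measureReal_increment (by positivity) (by gcongr) measurableSet_Ioi,
          gaussianReal_real_Iio])
    simp only [mul_div_cancel₀ s hn'.ne'] at h
    rw [hB.measureReal_lt hs, hB.measureReal_lt hs] at h
    refine h.trans (add_le_add_left (measureReal_mono ?_) _)
    rintro ω ⟨k, hk, hlt⟩
    refine ⟨k * (s / n), by positivity, ?_, hlt.le⟩
    have hk' : (k : ℝ) ≤ n := by exact_mod_cast hk
    calc (k : ℝ) * (s / n) ≤ n * (s / n) := by gcongr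
      _ = s := mul_div_cancel₀ _ hn'.ne'
  have hcont : Tendsto (fun δ => gaussianTail (x / √s) + gaussianTail ((x + 2 * δ) / √s)) (𝓝[>] 0)
      (𝓝 (2 * gaussianTail (x / √s))) := by
    refine Tendsto.mono_left ?_ nhdsWithin_le_nhds
    have : Continuous fun δ => gaussianTail (x / √s) + gaussianTail ((x + 2 * δ) / √s) :=
      continuous_const.add (continuous_gaussianTail.comp (by fun_prop))
    convert! this.tendsto 0 using 2
    rw [mul_zero, add_zero, two_mul]
  exact le_of_tendsto hcont (by filter_upwards [self_mem_nhdsWithin] with δ hδ using key δ hδ)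

/-- The **reflection principle**. -/
lemma measureReal_exists_ge (hB : IsRegularBrownianMotion P B) {s x : ℝ} (hs : 0 < s)
    (hx : 0 ≤ x) :
    P.real {ω | ∃ r, 0 ≤ r ∧ r ≤ s ∧ x ≤ B r ω} = 2 * gaussianTail (x / √s) :=
  le_antisymm (hB.measureReal_exists_ge_le hs x) (hB.le_measureReal_exists_ge hs hx)

/-- The probability of reaching level `x` before time `T` after having been below the curve
`x - a √(T - r)`. -/
lemma measureReal_below_curve_then_ge (hB : IsRegularBrownianMotion P B) {T : ℝ} (hT : 0 < T)
    (x : ℝ) {a : ℝ} (ha : 0 < a) :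
    P.real {ω | ∃ r r', 0 ≤ r ∧ r ≤ r' ∧ r' < T ∧ B r ω ≤ x - a * √(T - r) ∧ x ≤ B r' ω}
      ≤ 2 * gaussianTail a := by
  have key : ∀ c ∈ Ioo 0 a,
      P.real {ω | ∃ r r', 0 ≤ r ∧ r ≤ r' ∧ r' < T ∧ B r ω ≤ x - a * √(T - r) ∧ x ≤ B r' ω}
        ≤ 2 * gaussianTail c := by
    rintro c ⟨hc0, hca⟩
    obtain ⟨b, hcb, hba⟩ := exists_between hca
    set low : ℝ → ℝ := fun r => x - b * √(T - r) with hlow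
    set upp : ℝ → ℝ := fun r => x - (b - c) * √(T - r) with hupp
    have hlowc : Continuous low := by fun_prop
    have huppc : Continuous upp := by fun_prop
    have huppm : Monotone upp := fun r r' h => by
      have : √(T - r') ≤ √(T - r) := Real.sqrt_le_sqrt (by linarith)
      simp only [hupp]
      nlinarith
    refine measureReal_le_of_eventually_mem (E := fun n : ℕ => {ω | ∃ k ≤ n,
      (k : ℝ) * (T / n) < T ∧ upp (k * (T / n)) ≤ B (k * (T / n)) ω ∧
        ∃ j ≤ k, B (j * (T / n)) ω ≤ low (j * (T / n))}) ?_ ?_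
    · filter_upwards [eventually_gt_atTop 0] with n hn
      have hn' : (0 : ℝ) < n := by exact_mod_cast hn
      have hh : 0 ≤ T / n := by positivity
      have hhist : ∀ {j k : ℕ}, j ≤ k →
          Measurable[incrementHistory (fun (k : ℕ) => B (k * (T / n))) k] (B (j * (T / n))) :=
        fun {j k} hjk => measurable_incrementHistory (S := fun (k : ℕ) => B (k * (T / n)))
          (by simp [hB.zero]) hjk
      have h := measureReal_exists_le_two_mul (S := fun (k : ℕ) => B (k * (T / n)))
        (fun k => hB.measurable _) (hB.indep_grid hh) n
        (W := fun k => {ω | (k : ℝ) * (T / n) < T ∧ upp (k * (T / n)) ≤ B (k * (T / n)) ω ∧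
          ∃ j ≤ k, B (j * (T / n)) ω ≤ low (j * (T / n))})
        (fun k => by
          have e : {ω | (k : ℝ) * (T / n) < T ∧ upp (k * (T / n)) ≤ B (k * (T / n)) ω ∧
              ∃ j ≤ k, B (j * (T / n)) ω ≤ low (j * (T / n))} =
              {_ω | (k : ℝ) * (T / n) < T} ∩ (B (k * (T / n)) ⁻¹' Ici (upp (k * (T / n))) ∩
                ⋃ j ∈ Iic k, B (j * (T / n)) ⁻¹' Iic (low (j * (T / n)))) := by
            ext ω
            simp
          rw [e]
          refine MeasurableSet.inter (MeasurableSet.const _) (MeasurableSet.inter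
            (hhist le_rfl measurableSet_Ici) (MeasurableSet.biUnion (to_countable _) ?_))
          exact fun j hj => hhist hj measurableSet_Iic)
        (fun k hk => hB.half_le_increment hh hk)
      refine h.trans (mul_le_mul_of_nonneg_left ?_ zero_le_two)
      refine le_trans (measureReal_mono ?_) (measureReal_firstEvent_increment_le
        (S := fun (k : ℕ) => B (k * (T / n))) (fun k => hB.measurable _) (hB.indep_grid hh) n
        (W := fun k => {ω | B (k * (T / n)) ω ≤ low (k * (T / n))})
        (fun k => hhist le_rfl measurableSet_Iic)
        (V := fun k => {y | (k : ℝ) * (T / n) < T ∧ c * √(T - k * (T / n)) ≤ y})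
        (fun k => (MeasurableSet.const _).inter measurableSet_Ici) ?_)
      · rintro ω ⟨k, hk, ⟨hkT, hup, j, hjk, hlo⟩, hle⟩
        obtain ⟨i, hij, hi⟩ := exists_mem_firstEvent
          (W := fun k : ℕ => {ω | B (k * (T / n)) ω ≤ low (k * (T / n))}) hlo
        have hik : (i : ℝ) * (T / n) ≤ k * (T / n) := by
          have : (i : ℝ) ≤ k := by exact_mod_cast hij.trans hjk
          gcongr
        refine ⟨i, by omega, hi, hik.trans_lt hkT, ?_⟩
        have h1 : B (i * (T / n)) ω ≤ low (i * (T / n)) := hi.1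
        have h2 := huppm hik
        simp only [hlow, hupp] at h1 h2 hup
        linarith
      · intro k hk
        by_cases hkT : (k : ℝ) * (T / n) < T
        · have hpos : 0 < T - k * (T / n) := by linarith
          have e : {ω | B (n * (T / n)) ω - B (k * (T / n)) ω ∈
              {y | (k : ℝ) * (T / n) < T ∧ c * √(T - k * (T / n)) ≤ y}} =
              {ω | B T ω - B (k * (T / n)) ω ∈ Ici (c * √(T - k * (T / n)))} := by
            ext ω
            simp [hkT, mul_div_cancel₀ T hn'.ne']
          rw [e, hB.measureReal_increment (by positivity) hkT.le measurableSet_Ici,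
            gaussianReal_real_Ici hpos, mul_div_cancel_right₀ _ (Real.sqrt_pos.2 hpos).ne']
        · simp [hkT, gaussianTail_nonneg]
    · rintro ω ⟨r, r', hr, hrr', hr'T, hBr, hBr'⟩
      have hs : 0 < √(T - r) := Real.sqrt_pos.2 (by linarith)
      have hs' : 0 < √(T - r') := Real.sqrt_pos.2 (by linarith)
      have ht := tendsto_floor_grid hT hr
      have ht' := tendsto_floor_grid hT (hr.trans hrr')
      have hlt : B r ω < low r := by
        simp only [hlow]
        nlinarith
      have hlt' : upp r' < B r' ω := by
        simp only [hupp]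
        nlinarith
      filter_upwards [ht'.eventually (gt_mem_nhds hr'T),
        ht.eventually ((hB.continuous ω).continuousAt.eventually_lt hlowc.continuousAt hlt),
        ht'.eventually (huppc.continuousAt.eventually_lt (hB.continuous ω).continuousAt hlt')]
        with n h1 h2 h3
      refine ⟨_, floor_grid_le hT hr'T.le n, h1, h3.le, _, Nat.floor_mono ?_, h2.le⟩
      gcongr
  have hcont : Tendsto (fun c => 2 * gaussianTail c) (𝓝[<] a) (𝓝 (2 * gaussianTail a)) :=
    Tendsto.mono_left ((continuous_const.mul continuous_gaussianTail).tendsto a) nhdsWithin_le_nhds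
  exact ge_of_tendsto hcont
    (by filter_upwards [Ioo_mem_nhdsLT ha] with c hc using key c hc)

end IsRegularBrownianMotion

end BrownianMotion

/-- Pointwise convergence of the distribution functions implies convergence in law. -/
lemma tendsto_integral_of_tendsto_Iic {ι : Type*} {l : Filter ι} [l.IsCountablyGenerated]
    {μ : ι → Measure ℝ} {ν : Measure ℝ} [IsProbabilityMeasure ν]
    (hμ : ∀ᶠ i in l, IsProbabilityMeasure (μ i))
    (h : ∀ c, Tendsto (fun i => (μ i).real (Iic c)) l (𝓝 (ν.real (Iic c))))
    (f : BoundedContinuousFunction ℝ ℝ) :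
    Tendsto (fun i => ∫ x, f x ∂(μ i)) l (𝓝 (∫ x, f x ∂ν)) := by
  classical
  let μ' : ι → ProbabilityMeasure ℝ := fun i =>
    if hi : IsProbabilityMeasure (μ i) then ⟨μ i, hi⟩ else ⟨Measure.dirac 0, inferInstance⟩
  have hμ' : ∀ᶠ i in l, (μ' i : Measure ℝ) = μ i := by
    filter_upwards [hμ] with i hi
    simp [μ', hi]
  let ν' : ProbabilityMeasure ℝ := ⟨ν, inferInstance⟩
  have hIoc : ∀ (ρ : Measure ℝ) [IsProbabilityMeasure ρ] (a b : ℝ), a ≤ b →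
      ρ.real (Ioc a b) = ρ.real (Iic b) - ρ.real (Iic a) := by
    intro ρ _ a b hab
    have h : Ioc a b = Iic b \ Iic a := by
      ext
      simp [and_comm]
    rw [h, measureReal_sdiff (Iic_subset_Iic.2 hab) measurableSet_Iic]
  have hlim : Tendsto μ' l (𝓝 ν') := by
    refine IsPiSystem.tendsto_probabilityMeasure_of_tendsto_of_mem
      (S := {s | ∃ a b : ℝ, a ≤ b ∧ s = Ioc a b}) ?_ ?_ ?_ ?_
    · rintro _ ⟨a, b, -, rfl⟩ _ ⟨a', b', -, rfl⟩ hne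
      rw [Ioc_inter_Ioc] at hne ⊢
      exact ⟨_, _, (nonempty_Ioc.1 hne).le, rfl⟩
    · rintro _ ⟨a, b, -, rfl⟩
      exact measurableSet_Ioc
    · intro u hu x hx
      obtain ⟨δ, hδ, hsub⟩ := Metric.isOpen_iff.1 hu x hx
      refine ⟨Ioc (x - δ / 2) (x + δ / 2), ⟨_, _, by linarith, rfl⟩,
        Ioc_mem_nhds (by linarith) (by linarith), fun y hy => hsub ?_⟩
      rw [Metric.mem_ball, Real.dist_eq, abs_lt]
      constructor <;> linarith [hy.1, hy.2]
    · rintro _ ⟨a, b, hab, rfl⟩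
      rw [← NNReal.tendsto_coe]
      have ht : Tendsto (fun i => (μ i).real (Iic b) - (μ i).real (Iic a)) l
          (𝓝 (ν.real (Ioc a b))) := by
        rw [hIoc ν a b hab]
        exact (h b).sub (h a)
      refine ht.congr' ?_
      filter_upwards [hμ, hμ'] with i hi hi'
      rw [← hIoc (μ i) a b hab, ← hi']
      rfl
  refine ((ProbabilityMeasure.tendsto_iff_forall_integral_tendsto.1 hlim) f).congr' ?_
  filter_upwards [hμ'] with i hi
  rw [hi]

section HittingTime

variable {Ω : Type*} {Y : ℝ → Ω → ℝ}

lemma isClosed_hittingSet (hc : ∀ ω, Continuous fun t => Y t ω) (ω : Ω) :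
    IsClosed {t | 0 ≤ t ∧ Y t ω = 0} :=
  (isClosed_le continuous_const continuous_id).inter (isClosed_eq (hc ω) continuous_const)

variable [MeasurableSpace Ω]

lemma measurableSet_forall_Icc_ne_zero (hc : ∀ ω, Continuous fun t => Y t ω)
    (hm : ∀ t, Measurable (Y t)) {t : ℝ} (ht : 0 ≤ t) :
    MeasurableSet {ω | ∀ r ∈ Icc 0 t, Y r ω ≠ 0} := by
  have h : {ω | ∀ r ∈ Icc 0 t, Y r ω ≠ 0} =
      ⋃ m : ℕ, ⋂ q : ℚ, {ω | 1 / ((m : ℝ) + 1) ≤ |Y (max 0 (min (q : ℝ) t)) ω|} := by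
    ext ω
    simp only [mem_ofPred_eq, mem_iUnion, mem_iInter]
    constructor
    · intro hω
      obtain ⟨r, hr, hmin⟩ := isCompact_Icc.exists_isMinOn (nonempty_Icc.2 ht)
        (hc ω).abs.continuousOn
      obtain ⟨m, hm⟩ := exists_nat_one_div_lt (abs_pos.2 (hω r hr))
      exact ⟨m, fun q => hm.le.trans (hmin ⟨le_max_left _ _, max_le ht (min_le_right _ _)⟩)⟩
    · rintro ⟨m, hm⟩ r hr h0
      have hclosed : IsClosed {q : ℝ | 1 / ((m : ℝ) + 1) ≤ |Y (max 0 (min q t)) ω|} :=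
        isClosed_le continuous_const ((hc ω).comp (by fun_prop)).abs
      have hall : ∀ q : ℝ, 1 / ((m : ℝ) + 1) ≤ |Y (max 0 (min q t)) ω| := fun q =>
        Rat.denseRange_cast.induction_on (p := fun q : ℝ =>
          1 / ((m : ℝ) + 1) ≤ |Y (max 0 (min q t)) ω|) q hclosed hm
      have := hall r
      rw [min_eq_left hr.2, max_eq_right hr.1, h0, abs_zero] at this
      have : (0 : ℝ) < 1 / ((m : ℝ) + 1) := by positivity
      linarith
  rw [h]
  exact MeasurableSet.iUnion fun m => MeasurableSet.iInter fun q =>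
    measurableSet_le measurable_const (hm _).abs

lemma measurableSet_hittingSet_nonempty (hc : ∀ ω, Continuous fun t => Y t ω)
    (hm : ∀ t, Measurable (Y t)) :
    MeasurableSet {ω | {t | 0 ≤ t ∧ Y t ω = 0}.Nonempty} := by
  have h : {ω | {t | 0 ≤ t ∧ Y t ω = 0}.Nonempty} =
      ⋃ n : ℕ, {ω | ∀ r ∈ Icc 0 (n : ℝ), Y r ω ≠ 0}ᶜ := by
    ext ω
    simp only [mem_ofPred_eq, mem_iUnion, mem_compl_iff, not_forall, not_not]
    constructor
    · rintro ⟨t, ht, h0⟩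
      obtain ⟨n, hn⟩ := exists_nat_ge t
      exact ⟨n, t, ⟨ht, hn⟩, h0⟩
    · rintro ⟨n, t, ht, h0⟩
      exact ⟨t, ht.1, h0⟩
  rw [h]
  exact MeasurableSet.iUnion fun n =>
    (measurableSet_forall_Icc_ne_zero hc hm (Nat.cast_nonneg n)).compl

lemma measurable_sInf_hittingSet (hc : ∀ ω, Continuous fun t => Y t ω)
    (hm : ∀ t, Measurable (Y t)) :
    Measurable fun ω => sInf {t | 0 ≤ t ∧ Y t ω = 0} := by
  refine measurable_of_Ioi fun t => ?_
  rcases lt_or_ge t 0 with ht | ht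
  · convert! MeasurableSet.univ (α := Ω)
    refine eq_univ_of_forall fun ω => ht.trans_le (Real.sInf_nonneg fun s hs => hs.1)
  have h : (fun ω => sInf {t | 0 ≤ t ∧ Y t ω = 0}) ⁻¹' Ioi t =
      {ω | {t | 0 ≤ t ∧ Y t ω = 0}.Nonempty} ∩ {ω | ∀ r ∈ Icc 0 t, Y r ω ≠ 0} := by
    ext ω
    have hbdd : BddBelow {t | 0 ≤ t ∧ Y t ω = 0} := ⟨0, fun s hs => hs.1⟩
    constructor
    · intro hω
      have hω : t < sInf {t | 0 ≤ t ∧ Y t ω = 0} := hω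
      constructor
      · by_contra hne
        rw [mem_ofPred_eq, not_nonempty_iff_eq_empty] at hne
        rw [hne, Real.sInf_empty] at hω
        linarith
      · intro r hr h0
        exact absurd (csInf_le hbdd ⟨hr.1, h0⟩) (not_le.2 (hr.2.trans_lt hω))
    · rintro ⟨hne, hω⟩
      have hmem := (isClosed_hittingSet hc ω).csInf_mem hne hbdd
      rw [mem_preimage, mem_Ioi]
      by_contra hle
      exact hω _ ⟨hmem.1, not_lt.1 hle⟩ hmem.2
  rw [h]
  exact (measurableSet_hittingSet_nonempty hc hm).inter (measurableSet_forall_Icc_ne_zero hc hm ht)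

end HittingTime

section ExitPath

/-- The variance of `∫₀ᵗ e^{-λs} dW(s)`. -/
noncomputable def varianceClock (lam t : ℝ) : ℝ := (1 - Real.exp (-(2 * lam * t))) / (2 * lam)

/-- The solution of `dX = λ X dt + ε dW`, `X(0) = x₀`, built on the path `b` run along the variance
clock. -/
noncomputable def unstablePath (lam x₀ ε : ℝ) (b : ℝ → ℝ) (t : ℝ) : ℝ :=
  Real.exp (lam * t) * (x₀ + ε * b (varianceClock lam t))

def exitSet (lam qm x₀ ε : ℝ) (b : ℝ → ℝ) : Set ℝ :=
  {t | 0 ≤ t ∧ (unstablePath lam x₀ ε b t = qm ∨ unstablePath lam x₀ ε b t = 0)}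

noncomputable def exitTime (lam qm x₀ ε : ℝ) (b : ℝ → ℝ) : ℝ := sInf (exitSet lam qm x₀ ε b)

def ExitsAtZero (lam qm x₀ ε : ℝ) (b : ℝ → ℝ) : Prop :=
  (exitSet lam qm x₀ ε b).Nonempty ∧ unstablePath lam x₀ ε b (exitTime lam qm x₀ ε b) = 0

variable {lam qm x₀ ε : ℝ} {b : ℝ → ℝ}

lemma continuous_varianceClock (lam : ℝ) : Continuous (varianceClock lam) := by
  unfold varianceClock
  fun_prop

lemma varianceClock_zero (lam : ℝ) : varianceClock lam 0 = 0 := by simp [varianceClock]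

lemma varianceClock_mono (hlam : 0 < lam) : Monotone (varianceClock lam) := by
  intro s t h
  unfold varianceClock
  gcongr

lemma varianceClock_nonneg (hlam : 0 < lam) {t : ℝ} (ht : 0 ≤ t) : 0 ≤ varianceClock lam t :=
  (varianceClock_zero lam).symm.le.trans (varianceClock_mono hlam ht)

lemma varianceClock_lt (hlam : 0 < lam) (t : ℝ) : varianceClock lam t < 1 / (2 * lam) := by
  unfold varianceClock
  gcongr
  linarith [Real.exp_pos (-(2 * lam * t))]

lemma varianceClock_pos (hlam : 0 < lam) {t : ℝ} (ht : 0 < t) : 0 < varianceClock lam t := by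
  unfold varianceClock
  have : Real.exp (-(2 * lam * t)) < 1 := Real.exp_lt_one_iff.2 (by nlinarith [mul_pos hlam ht])
  exact div_pos (by linarith) (by linarith)

lemma tendsto_varianceClock_atTop (hlam : 0 < lam) :
    Tendsto (varianceClock lam) atTop (𝓝 (1 / (2 * lam))) := by
  have h : Tendsto (fun t => Real.exp (-(2 * lam * t))) atTop (𝓝 0) :=
    Real.tendsto_exp_neg_atTop_nhds_zero.comp
      (tendsto_id.const_mul_atTop (by positivity : (0 : ℝ) < 2 * lam))
  unfold varianceClock
  simpa using (h.const_sub 1).div_const (2 * lam)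

lemma sqrt_sub_varianceClock (lam t : ℝ) :
    √(1 / (2 * lam) - varianceClock lam t) = Real.exp (-(lam * t)) / √(2 * lam) := by
  have h : 1 / (2 * lam) - varianceClock lam t = Real.exp (-(lam * t)) ^ 2 / (2 * lam) := by
    rw [varianceClock, ← Real.exp_nat_mul]
    push_cast
    rw [show (2 : ℝ) * -(lam * t) = -(2 * lam * t) by ring]
    ring
  rw [h, Real.sqrt_div (by positivity), Real.sqrt_sq (Real.exp_pos _).le]

lemma continuous_unstablePath (hb : Continuous b) : Continuous (unstablePath lam x₀ ε b) := by
  have h := continuous_varianceClock lam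
  unfold unstablePath
  fun_prop

lemma unstablePath_zero (hb0 : b 0 = 0) : unstablePath lam x₀ ε b 0 = x₀ := by
  simp [unstablePath, varianceClock_zero, hb0]

lemma unstablePath_nonneg_iff (hε : 0 < ε) (t : ℝ) :
    0 ≤ unstablePath lam x₀ ε b t ↔ -x₀ / ε ≤ b (varianceClock lam t) := by
  rw [unstablePath, mul_nonneg_iff_of_pos_left (Real.exp_pos _), div_le_iff₀ hε]
  constructor <;> intro h <;> linarith

lemma eq_sub_of_unstablePath_eq (hlam : 0 < lam) (hε : 0 < ε) {t : ℝ}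
    (h : unstablePath lam x₀ ε b t = qm) :
    b (varianceClock lam t) =
      -x₀ / ε - -qm * √(2 * lam) / ε * √(1 / (2 * lam) - varianceClock lam t) := by
  have h2 : √(2 * lam) ≠ 0 := (Real.sqrt_pos.2 (by linarith)).ne'
  rw [sqrt_sub_varianceClock, ← h, unstablePath, Real.exp_neg]
  have := (Real.exp_pos (lam * t)).ne'
  field_simp
  ring

lemma bddBelow_exitSet : BddBelow (exitSet lam qm x₀ ε b) := ⟨0, fun _ h => h.1⟩

lemma exitTime_nonneg : 0 ≤ exitTime lam qm x₀ ε b := Real.sInf_nonneg fun _ h => h.1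

lemma exitSet_eq : exitSet lam qm x₀ ε b = {t | 0 ≤ t ∧
    (unstablePath lam x₀ ε b t - qm) * unstablePath lam x₀ ε b t = 0} := by
  ext t
  simp [exitSet, sub_eq_zero]

lemma exitTime_mem (hb : Continuous b) (h : (exitSet lam qm x₀ ε b).Nonempty) :
    exitTime lam qm x₀ ε b ∈ exitSet lam qm x₀ ε b := by
  refine IsClosed.csInf_mem ?_ h bddBelow_exitSet
  have hc := continuous_unstablePath (lam := lam) (x₀ := x₀) (ε := ε) hb
  rw [exitSet_eq]
  exact (isClosed_le continuous_const continuous_id).inter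
    (isClosed_eq ((hc.sub continuous_const).mul hc) continuous_const)

lemma ExitsAtZero.le_apply (hε : 0 < ε) (h : ExitsAtZero lam qm x₀ ε b) :
    -x₀ / ε ≤ b (varianceClock lam (exitTime lam qm x₀ ε b)) :=
  (unstablePath_nonneg_iff hε _).1 h.2.ge

lemma exitsAtZero_or_below_curve (hlam : 0 < lam) (hε : 0 < ε) (hx₀ : x₀ ≤ 0) (hb : Continuous b)
    (hb0 : b 0 = 0) {t r : ℝ} (ht : 0 ≤ t) (hr : 0 ≤ r) (hrt : r ≤ varianceClock lam t)
    (hbr : -x₀ / ε ≤ b r) :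
    (ExitsAtZero lam qm x₀ ε b ∧ exitTime lam qm x₀ ε b ≤ t) ∨
      ∃ r r', 0 ≤ r ∧ r ≤ r' ∧ r' < 1 / (2 * lam) ∧
        b r ≤ -x₀ / ε - -qm * √(2 * lam) / ε * √(1 / (2 * lam) - r) ∧ -x₀ / ε ≤ b r' := by
  obtain ⟨s, hs, rfl⟩ := intermediate_value_Icc ht (continuous_varianceClock lam).continuousOn
    (⟨by rwa [varianceClock_zero], hrt⟩ : r ∈ Icc (varianceClock lam 0) (varianceClock lam t))
  obtain ⟨s', hs', h0⟩ := intermediate_value_Icc hs.1 (continuous_unstablePath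
    (lam := lam) (x₀ := x₀) (ε := ε) hb).continuousOn
    ⟨by rwa [unstablePath_zero hb0], (unstablePath_nonneg_iff hε s).2 hbr⟩
  have hmem : s' ∈ exitSet lam qm x₀ ε b := ⟨hs'.1, Or.inr h0⟩
  have hle : exitTime lam qm x₀ ε b ≤ s' := csInf_le bddBelow_exitSet hmem
  rcases (exitTime_mem hb ⟨s', hmem⟩).2 with h | h
  · exact Or.inr ⟨_, _, varianceClock_nonneg hlam exitTime_nonneg,
      varianceClock_mono hlam (hle.trans hs'.2), varianceClock_lt hlam s,
      (eq_sub_of_unstablePath_eq hlam hε h).le, hbr⟩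
  · exact Or.inl ⟨⟨⟨s', hmem⟩, h⟩, hle.trans (hs'.2.trans hs.2)⟩

end ExitPath

section ExitProbability

variable {Ω : Type*} [MeasurableSpace Ω] {P : Measure Ω} {B : ℝ → Ω → ℝ} {lam qm x₀ ε : ℝ}

lemma measurable_unstablePath (hB : ∀ t, Measurable (B t)) (t : ℝ) :
    Measurable fun ω => unstablePath lam x₀ ε (B · ω) t := by
  unfold unstablePath
  have := hB (varianceClock lam t)
  fun_prop

lemma measurable_exitTime (hB : IsRegularBrownianMotion P B) :
    Measurable fun ω => exitTime lam qm x₀ ε (B · ω) := by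
  simp only [exitTime, exitSet_eq]
  refine measurable_sInf_hittingSet (Y := fun t ω =>
    (unstablePath lam x₀ ε (B · ω) t - qm) * unstablePath lam x₀ ε (B · ω) t) (fun ω => ?_)
    fun t => ?_
  · have hc := continuous_unstablePath (lam := lam) (x₀ := x₀) (ε := ε) (hB.continuous ω)
    exact (hc.sub continuous_const).mul hc
  · have hm := measurable_unstablePath (lam := lam) (x₀ := x₀) (ε := ε) hB.measurable t
    exact (hm.sub measurable_const).mul hm

lemma measurableSet_exitsAtZero (hB : IsRegularBrownianMotion P B) :
    MeasurableSet {ω | ExitsAtZero lam qm x₀ ε (B · ω)} := by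
  have hc : ∀ ω, Continuous (unstablePath lam x₀ ε (B · ω)) := fun ω =>
    continuous_unstablePath (hB.continuous ω)
  have hm := measurable_unstablePath (lam := lam) (x₀ := x₀) (ε := ε) hB.measurable
  refine MeasurableSet.inter ?_ ?_
  · simp only [exitSet_eq]
    exact measurableSet_hittingSet_nonempty (Y := fun t ω =>
      (unstablePath lam x₀ ε (B · ω) t - qm) * unstablePath lam x₀ ε (B · ω) t)
      (fun ω => ((hc ω).sub continuous_const).mul (hc ω))
      fun t => ((hm t).sub measurable_const).mul (hm t)
  · have h := (measurable_uncurry_of_continuous_of_measurable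
      (u := fun t ω => unstablePath lam x₀ ε (B · ω) t) hc hm).comp
      ((measurable_exitTime (lam := lam) (qm := qm) (x₀ := x₀) (ε := ε) hB).prodMk measurable_id)
    exact h (measurableSet_singleton 0)

variable [IsProbabilityMeasure P]

lemma measureReal_exitsAtZero_le_time (hB : IsRegularBrownianMotion P B) (hlam : 0 < lam)
    (hε : 0 < ε) (hx₀ : x₀ ≤ 0) {t : ℝ} (ht : 0 < t) :
    P.real {ω | ExitsAtZero lam qm x₀ ε (B · ω) ∧ exitTime lam qm x₀ ε (B · ω) ≤ t} ≤
      2 * gaussianTail (-x₀ / ε / √(varianceClock lam t)) := by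
  rw [← hB.measureReal_exists_ge (varianceClock_pos hlam ht)
    (div_nonneg (neg_nonneg.2 hx₀) hε.le)]
  exact measureReal_mono fun ω hω => ⟨_, varianceClock_nonneg hlam exitTime_nonneg,
    varianceClock_mono hlam hω.2, hω.1.le_apply hε⟩

lemma le_measureReal_exitsAtZero_le_time (hB : IsRegularBrownianMotion P B) (hlam : 0 < lam)
    (hε : 0 < ε) (hx₀ : x₀ ≤ 0) (hqm : qm < 0) {t : ℝ} (ht : 0 < t) :
    2 * gaussianTail (-x₀ / ε / √(varianceClock lam t)) -
      2 * gaussianTail (-qm * √(2 * lam) / ε) ≤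
    P.real {ω | ExitsAtZero lam qm x₀ ε (B · ω) ∧ exitTime lam qm x₀ ε (B · ω) ≤ t} := by
  have ha : 0 < -qm * √(2 * lam) / ε :=
    div_pos (mul_pos (by linarith) (Real.sqrt_pos.2 (by linarith))) hε
  have h1 := hB.measureReal_below_curve_then_ge (T := 1 / (2 * lam)) (by positivity) (-x₀ / ε) ha
  rw [← hB.measureReal_exists_ge (varianceClock_pos hlam ht)
    (div_nonneg (neg_nonneg.2 hx₀) hε.le), sub_le_iff_le_add]
  refine ((measureReal_mono ?_ (measure_ne_top _ _)).trans (measureReal_union_le _ _)).trans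
    (add_le_add_right h1 _)
  rintro ω ⟨r, hr, hrt, hbr⟩
  exact exitsAtZero_or_below_curve hlam hε hx₀ (hB.continuous ω) (hB.zero ω) ht.le hr hrt hbr

lemma measureReal_exitsAtZero_le (hB : IsRegularBrownianMotion P B) (hlam : 0 < lam)
    (hε : 0 < ε) (hx₀ : x₀ ≤ 0) :
    P.real {ω | ExitsAtZero lam qm x₀ ε (B · ω)} ≤
      2 * gaussianTail (-x₀ / ε / √(1 / (2 * lam))) := by
  rw [← hB.measureReal_exists_ge (by positivity) (div_nonneg (neg_nonneg.2 hx₀) hε.le)]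
  exact measureReal_mono fun ω hω => ⟨_, varianceClock_nonneg hlam exitTime_nonneg,
    (varianceClock_lt hlam _).le, ExitsAtZero.le_apply hε hω⟩

lemma le_measureReal_exitsAtZero (hB : IsRegularBrownianMotion P B) (hlam : 0 < lam)
    (hε : 0 < ε) (hx₀ : x₀ ≤ 0) (hqm : qm < 0) :
    2 * gaussianTail (-x₀ / ε / √(1 / (2 * lam))) - 2 * gaussianTail (-qm * √(2 * lam) / ε) ≤
      P.real {ω | ExitsAtZero lam qm x₀ ε (B · ω)} := by
  have h0 : √(1 / (2 * lam)) ≠ 0 := (Real.sqrt_pos.2 (by positivity)).ne'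
  have ht : Tendsto (fun t => 2 * gaussianTail (-x₀ / ε / √(varianceClock lam t)) -
      2 * gaussianTail (-qm * √(2 * lam) / ε)) atTop
      (𝓝 (2 * gaussianTail (-x₀ / ε / √(1 / (2 * lam))) -
        2 * gaussianTail (-qm * √(2 * lam) / ε))) :=
    (((continuous_gaussianTail.tendsto _).comp (tendsto_const_nhds.div
      (tendsto_varianceClock_atTop hlam).sqrt h0)).const_mul 2).sub_const _
  refine le_of_tendsto ht ?_
  filter_upwards [eventually_gt_atTop 0] with t h
  exact (le_measureReal_exitsAtZero_le_time hB hlam hε hx₀ hqm h).trans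
    (measureReal_mono fun ω hω => hω.1)

end ExitProbability

section Asymptotics

variable {lam qm x₀ : ℝ}

lemma varianceClock_log_add (hlam : 0 < lam) {ε : ℝ} (hε : 0 < ε) (c : ℝ) :
    varianceClock lam (1 / lam * Real.log (1 / ε) + c) =
      (1 - ε ^ 2 * Real.exp (-(2 * lam * c))) / (2 * lam) := by
  have h : -(2 * lam * (1 / lam * Real.log (1 / ε) + c)) =
      Real.log ε + Real.log ε + -(2 * lam * c) := by
    rw [one_div, one_div, Real.log_inv]
    field_simp
    ring
  rw [varianceClock, h, Real.exp_add, Real.exp_add, Real.exp_log hε]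
  ring

lemma tendsto_log_one_div_add_atTop (hlam : 0 < lam) (c : ℝ) :
    Tendsto (fun ε => 1 / lam * Real.log (1 / ε) + c) (𝓝[>] 0) atTop := by
  refine tendsto_atTop_add_const_right _ _ (Tendsto.const_mul_atTop (by positivity) ?_)
  simp only [one_div]
  exact Real.tendsto_log_atTop.comp tendsto_inv_nhdsGT_zero

lemma tendsto_div_nhdsGT_zero_atTop {k : ℝ} (hk : 0 < k) :
    Tendsto (fun ε => k / ε) (𝓝[>] 0) atTop :=
  tendsto_inv_nhdsGT_zero.const_mul_atTop hk

lemma tendsto_scaled_distance (hlam : 0 < lam) (hx₀ : x₀ < 0) :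
    Tendsto (fun ε => -x₀ / ε / √(1 / (2 * lam))) (𝓝[>] 0) atTop :=
  (tendsto_div_nhdsGT_zero_atTop (neg_pos.2 hx₀)).atTop_div_const (Real.sqrt_pos.2 (by positivity))

/-- The Gumbel factor is the limiting ratio of the hitting probabilities before time
`(1/λ) ln(1/ε) + c` and before time `∞`. -/
lemma tendsto_gaussianTail_varianceClock_ratio (hlam : 0 < lam) (hx₀ : x₀ < 0) (c : ℝ) :
    Tendsto (fun ε => gaussianTail (-x₀ / ε /
        √(varianceClock lam (1 / lam * Real.log (1 / ε) + c))) /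
        gaussianTail (-x₀ / ε / √(1 / (2 * lam)))) (𝓝[>] 0)
      (𝓝 (Real.exp (-(x₀ ^ 2 * lam * Real.exp (-(2 * lam * c)))))) := by
  set κ := Real.exp (-(2 * lam * c)) with hκ
  have hT : 0 < 1 / (2 * lam) := by positivity
  have hpos : ∀ᶠ ε : ℝ in 𝓝[>] 0, 0 < ε := self_mem_nhdsWithin
  have hclock := (tendsto_varianceClock_atTop hlam).comp (tendsto_log_one_div_add_atTop hlam c)
  have hclock_pos : ∀ᶠ ε : ℝ in 𝓝[>] 0,
      0 < varianceClock lam (1 / lam * Real.log (1 / ε) + c) := by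
    filter_upwards [(tendsto_log_one_div_add_atTop hlam c).eventually_gt_atTop 0] with ε h
    exact varianceClock_pos hlam h
  have hz := tendsto_scaled_distance hlam hx₀
  have hy : Tendsto (fun ε => -x₀ / ε /
      √(varianceClock lam (1 / lam * Real.log (1 / ε) + c))) (𝓝[>] 0) atTop := by
    refine tendsto_atTop_mono' _ ?_ hz
    filter_upwards [hpos, hclock_pos] with ε hε hc
    have := varianceClock_lt hlam (1 / lam * Real.log (1 / ε) + c)
    have h0 := Real.sqrt_pos.2 hc
    have h1 : 0 ≤ -x₀ / ε := div_nonneg (by linarith) hε.le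
    gcongr
  rw [← one_mul (Real.exp (-(x₀ ^ 2 * lam * κ)))]
  refine tendsto_gaussianTail_ratio hy hz ?_ ?_
  · have h := hclock.sqrt.div_const √(1 / (2 * lam))
    rw [div_self (Real.sqrt_pos.2 hT).ne'] at h
    refine h.congr' ?_
    filter_upwards [hpos, hclock_pos] with ε hε hc
    have h0 := (Real.sqrt_pos.2 hc).ne'
    have h1 := (Real.sqrt_pos.2 hT).ne'
    have h2 := hx₀.ne
    simp only [Function.comp]
    rw [div_div_div_comm, neg_div, div_self (neg_ne_zero.2 (div_ne_zero h2 hε.ne')), one_div_div]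
  · have h : Tendsto (fun ε : ℝ => Real.exp (-(x₀ ^ 2 * lam * κ / (1 - ε ^ 2 * κ)))) (𝓝[>] 0)
        (𝓝 (Real.exp (-(x₀ ^ 2 * lam * κ)))) := by
      have h1 : ContinuousAt (fun ε : ℝ => Real.exp (-(x₀ ^ 2 * lam * κ / (1 - ε ^ 2 * κ)))) 0 := by
        have : (1 : ℝ) - 0 ^ 2 * κ ≠ 0 := by simp
        fun_prop (disch := assumption)
      simpa using h1.tendsto.mono_left nhdsWithin_le_nhds
    refine h.congr' ?_
    filter_upwards [hpos, hclock_pos] with ε hε hc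
    simp only [div_pow, Real.sq_sqrt hc.le, Real.sq_sqrt hT.le]
    rw [varianceClock_log_add hlam hε, ← hκ] at hc ⊢
    have h0 : 0 < 1 - ε ^ 2 * κ := by
      rwa [div_pos_iff_of_pos_right (by positivity)] at hc
    clear_value κ
    congr 1
    obtain ⟨u, hu⟩ : ∃ u, u = 1 - ε ^ 2 * κ := ⟨_, rfl⟩
    have hκu : κ = (1 - u) / ε ^ 2 := by
      rw [hu]
      field_simp
      ring
    rw [← hu] at h0 ⊢
    rw [hκu]
    field_simp

/-- Touching `q₋` and then reaching `0` is negligible compared with reaching `0`. -/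
lemma tendsto_gaussianTail_lower_ratio (hlam : 0 < lam) (hqm : qm < x₀) (hx₀ : x₀ < 0) :
    Tendsto (fun ε => gaussianTail (-qm * √(2 * lam) / ε) /
      gaussianTail (-x₀ / ε / √(1 / (2 * lam)))) (𝓝[>] 0) (𝓝 0) := by
  have h2 : 0 < √(2 * lam) := Real.sqrt_pos.2 (by positivity)
  have hpos : ∀ᶠ ε : ℝ in 𝓝[>] 0, 0 < ε := self_mem_nhdsWithin
  have hdist : ∀ ε : ℝ, -x₀ / ε / √(1 / (2 * lam)) = -x₀ * √(2 * lam) / ε := fun ε => by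
    rw [one_div, Real.sqrt_inv, div_inv_eq_mul]
    ring
  simp only [hdist]
  have hmain := tendsto_gaussianTail_ratio (ρ := x₀ / qm) (κ := 0)
    (tendsto_div_nhdsGT_zero_atTop (k := -qm * √(2 * lam)) (mul_pos (by linarith) h2))
    (tendsto_div_nhdsGT_zero_atTop (k := -x₀ * √(2 * lam)) (mul_pos (by linarith) h2)) ?_ ?_
  · rwa [mul_zero] at hmain
  · refine tendsto_const_nhds.congr' ?_
    filter_upwards [hpos] with ε hε
    have : qm ≠ 0 := by linarith
    field_simp
  · have hk : 0 < lam * (qm ^ 2 - x₀ ^ 2) := mul_pos hlam (by nlinarith)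
    have h := Real.tendsto_exp_neg_atTop_nhds_zero.comp
      (((tendsto_pow_atTop two_ne_zero).comp tendsto_inv_nhdsGT_zero).const_mul_atTop hk)
    refine h.congr fun ε => ?_
    simp only [Function.comp]
    rw [div_pow, div_pow, mul_pow, mul_pow, Real.sq_sqrt (by positivity)]
    congr 1
    ring

variable {Ω : Type*} [MeasurableSpace Ω] {P : Measure Ω} [IsProbabilityMeasure P] {B : ℝ → Ω → ℝ}

lemma tendsto_measureReal_exitsAtZero_le_time_div (hB : IsRegularBrownianMotion P B)
    (hlam : 0 < lam) (hqm : qm < x₀) (hx₀ : x₀ < 0) (c : ℝ) :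
    Tendsto (fun ε => P.real {ω | ExitsAtZero lam qm x₀ ε (B · ω) ∧
          exitTime lam qm x₀ ε (B · ω) ≤ 1 / lam * Real.log (1 / ε) + c} /
        (2 * gaussianTail (-x₀ / ε / √(1 / (2 * lam))))) (𝓝[>] 0)
      (𝓝 (Real.exp (-(x₀ ^ 2 * lam * Real.exp (-(2 * lam * c)))))) := by
  have hpos : ∀ᶠ ε : ℝ in 𝓝[>] 0, 0 < ε := self_mem_nhdsWithin
  have htime := (tendsto_log_one_div_add_atTop hlam c).eventually_gt_atTop 0
  have hup := tendsto_gaussianTail_varianceClock_ratio hlam hx₀ c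
  have hlow := hup.sub (tendsto_gaussianTail_lower_ratio hlam hqm hx₀)
  rw [sub_zero] at hlow
  refine tendsto_of_tendsto_of_tendsto_of_le_of_le' hlow hup ?_ ?_
  · filter_upwards [hpos, htime] with ε hε ht
    have hQ := gaussianTail_pos (-x₀ / ε / √(1 / (2 * lam)))
    have := le_measureReal_exitsAtZero_le_time hB hlam hε hx₀.le (hqm.trans hx₀) ht
    rw [← sub_div, ← mul_div_mul_left _ _ two_ne_zero, mul_sub]
    gcongr
  · filter_upwards [hpos, htime] with ε hε ht
    have hQ := gaussianTail_pos (-x₀ / ε / √(1 / (2 * lam)))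
    have := measureReal_exitsAtZero_le_time (qm := qm) hB hlam hε hx₀.le ht
    rw [← mul_div_mul_left (gaussianTail (_ / √(varianceClock _ _))) _ two_ne_zero]
    gcongr

lemma tendsto_measureReal_exitsAtZero_div (hB : IsRegularBrownianMotion P B)
    (hlam : 0 < lam) (hqm : qm < x₀) (hx₀ : x₀ < 0) :
    Tendsto (fun ε => P.real {ω | ExitsAtZero lam qm x₀ ε (B · ω)} /
        (2 * gaussianTail (-x₀ / ε / √(1 / (2 * lam))))) (𝓝[>] 0) (𝓝 1) := by
  have hpos : ∀ᶠ ε : ℝ in 𝓝[>] 0, 0 < ε := self_mem_nhdsWithin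
  have hlow := (tendsto_gaussianTail_lower_ratio hlam hqm hx₀).const_sub 1
  rw [sub_zero] at hlow
  refine tendsto_of_tendsto_of_tendsto_of_le_of_le' hlow tendsto_const_nhds ?_ ?_
  · filter_upwards [hpos] with ε hε
    have hQ := gaussianTail_pos (-x₀ / ε / √(1 / (2 * lam)))
    have := le_measureReal_exitsAtZero hB hlam hε hx₀.le (hqm.trans hx₀)
    rw [one_sub_div hQ.ne', ← mul_div_mul_left _ _ two_ne_zero, mul_sub]
    gcongr
  · filter_upwards [hpos] with ε hε
    have hQ := gaussianTail_pos (-x₀ / ε / √(1 / (2 * lam)))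
    rw [div_le_one (by positivity)]
    exact measureReal_exitsAtZero_le hB hlam hε hx₀.le

/-- The conditional law of the centred exit time, for a regular Brownian motion. -/
lemma tendsto_integral_cond_exitsAtZero (hB : IsRegularBrownianMotion P B)
    (hlam : 0 < lam) (hqm : qm < x₀) (hx₀ : x₀ < 0) {ν : Measure ℝ} [IsProbabilityMeasure ν]
    (hν : ∀ c, ν.real (Iic c) = Real.exp (-(x₀ ^ 2 * lam * Real.exp (-(2 * lam * c)))))
    (f : BoundedContinuousFunction ℝ ℝ) :
    Tendsto (fun ε => ∫ ω, f (exitTime lam qm x₀ ε (B · ω) - 1 / lam * Real.log (1 / ε))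
      ∂(P[|{ω | ExitsAtZero lam qm x₀ ε (B · ω)}])) (𝓝[>] 0) (𝓝 (∫ x, f x ∂ν)) := by
  have hmeas : ∀ ε, Measurable fun ω =>
      exitTime lam qm x₀ ε (B · ω) - 1 / lam * Real.log (1 / ε) := fun ε =>
    (measurable_exitTime hB).sub measurable_const
  have hprob := tendsto_measureReal_exitsAtZero_div hB hlam hqm hx₀
  have hne : ∀ᶠ ε in 𝓝[>] 0, P {ω | ExitsAtZero lam qm x₀ ε (B · ω)} ≠ 0 := by
    filter_upwards [hprob.eventually_ne one_ne_zero] with ε hε h0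
    simp [Measure.real, h0] at hε
  have key := tendsto_integral_of_tendsto_Iic (l := 𝓝[>] (0 : ℝ)) (ν := ν)
    (μ := fun ε => (P[|{ω | ExitsAtZero lam qm x₀ ε (B · ω)}]).map fun ω =>
      exitTime lam qm x₀ ε (B · ω) - 1 / lam * Real.log (1 / ε)) ?_ ?_ f
  · refine key.congr fun ε => ?_
    exact integral_map (hmeas ε).aemeasurable f.continuous.aestronglyMeasurable
  · filter_upwards [hne] with ε hε
    have := cond_isProbabilityMeasure hε
    exact Measure.isProbabilityMeasure_map (hmeas ε).aemeasurable
  · intro c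
    have h := (tendsto_measureReal_exitsAtZero_le_time_div hB hlam hqm hx₀ c).div hprob one_ne_zero
    rw [div_one, ← hν c] at h
    refine h.congr fun ε => ?_
    have hQ := gaussianTail_pos (-x₀ / ε / √(1 / (2 * lam)))
    rw [Pi.div_apply, div_div_div_cancel_right₀ (by positivity), map_measureReal_apply (hmeas ε)
      measurableSet_Iic, measureReal_def (P[|_]), cond_apply (measurableSet_exitsAtZero hB),
      ENNReal.toReal_mul, ENNReal.toReal_inv, div_eq_inv_mul]
    congr 3
    ext ω
    exact and_congr_right fun _ => sub_le_iff_le_add'.symm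

end Asymptotics

section Modification

/-- A Brownian motion agrees almost surely, at all nonnegative times, with a regular one. -/
lemma IsBrownianMotion.exists_isRegularBrownianMotion {Ω : Type*} [MeasurableSpace Ω]
    {P : Measure Ω} {B : ℝ → Ω → ℝ} (hB : IsBrownianMotion P B) :
    ∃ B' : ℝ → Ω → ℝ, IsRegularBrownianMotion P B' ∧
      ∀ᵐ ω ∂P, ∀ t, 0 ≤ t → B' t ω = B t ω := by
  classical
  obtain ⟨hmeas, hpath, hlaw, hindep⟩ := hB
  obtain ⟨N, hN, hNmeas, hN0⟩ := exists_measurable_superset_of_null (ae_iff.1 hpath)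
  have hgood : ∀ ω ∉ N, B 0 ω = 0 ∧ ContinuousOn (fun t => B t ω) (Ici 0) := fun ω hω => by
    by_contra h
    exact hω (hN h)
  let B' : ℝ → Ω → ℝ := fun t ω => if ω ∈ N then 0 else B (max t 0) ω
  have hae : ∀ᵐ ω ∂P, ∀ t, 0 ≤ t → B' t ω = B t ω := by
    filter_upwards [measure_eq_zero_iff_ae_notMem.1 hN0] with ω hω t ht
    simp [B', hω, max_eq_left ht]
  have hincr : ∀ s t, 0 ≤ s → 0 ≤ t →
      (fun ω => B' t ω - B' s ω) =ᵐ[P] fun ω => B t ω - B s ω := fun s t hs ht => by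
    filter_upwards [hae] with ω hω
    rw [hω t ht, hω s hs]
  refine ⟨B', ⟨fun t => ?_, fun ω => ?_, fun ω => ?_, fun s t hs hst => ?_,
    fun t ht ht0 => ?_⟩, hae⟩
  · exact Measurable.ite hNmeas measurable_const (hmeas _)
  · by_cases hω : ω ∈ N
    · simp [B', hω]
    · simp [B', hω, (hgood ω hω).1]
  · by_cases hω : ω ∈ N
    · simp [B', hω, continuous_const]
    · simp only [B', hω, if_false]
      exact (hgood ω hω).2.comp_continuous (by fun_prop) fun t => le_max_right t 0
  · rw [Measure.map_congr (hincr s t hs (hs.trans hst)), hlaw s t hs hst]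
  · exact (iIndepFun_congr fun i => hincr _ _ (ht0 i) (ht0 (i + 1))).2 (hindep t ht ht0)

lemma cond_congr_set {Ω : Type*} [MeasurableSpace Ω] {P : Measure Ω} {s t : Set Ω}
    (h : s =ᵐ[P] t) : P[|s] = P[|t] := by
  rw [ProbabilityTheory.cond, ProbabilityTheory.cond, measure_congr h, Measure.restrict_congr_set h]

variable {lam qm x₀ ε : ℝ} {b b' : ℝ → ℝ}

lemma unstablePath_congr (hlam : 0 < lam) (h : ∀ t, 0 ≤ t → b' t = b t) {t : ℝ} (ht : 0 ≤ t) :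
    unstablePath lam x₀ ε b' t = unstablePath lam x₀ ε b t := by
  rw [unstablePath, unstablePath, h _ (varianceClock_nonneg hlam ht)]

lemma exitSet_congr (hlam : 0 < lam) (h : ∀ t, 0 ≤ t → b' t = b t) :
    exitSet lam qm x₀ ε b' = exitSet lam qm x₀ ε b := by
  ext t
  refine and_congr_right fun ht => ?_
  rw [unstablePath_congr hlam h ht]

lemma exitTime_congr (hlam : 0 < lam) (h : ∀ t, 0 ≤ t → b' t = b t) :
    exitTime lam qm x₀ ε b' = exitTime lam qm x₀ ε b := by
  rw [exitTime, exitTime, exitSet_congr hlam h]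

lemma exitsAtZero_congr (hlam : 0 < lam) (h : ∀ t, 0 ≤ t → b' t = b t) :
    ExitsAtZero lam qm x₀ ε b' ↔ ExitsAtZero lam qm x₀ ε b := by
  rw [ExitsAtZero, ExitsAtZero, exitSet_congr hlam h, exitTime_congr hlam h,
    unstablePath_congr hlam h exitTime_nonneg]

end Modification

lemma measureReal_map_affine_gumbel {Ω' : Type*} [MeasurableSpace Ω'] {P' : Measure Ω'}
    {Z : Ω' → ℝ} (hZmeas : Measurable Z)
    (hZ : ∀ x : ℝ, (P' {ω' | Z ω' ≤ x}).toReal = Real.exp (-Real.exp (-x)))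
    {lam k : ℝ} (hlam : 0 < lam) (hk : 0 < k) (c : ℝ) :
    (P'.map fun ω' => 1 / (2 * lam) * Real.log k + 1 / (2 * lam) * Z ω').real (Iic c) =
      Real.exp (-(k * Real.exp (-(2 * lam * c)))) := by
  have hset : (fun ω' => 1 / (2 * lam) * Real.log k + 1 / (2 * lam) * Z ω') ⁻¹' Iic c =
      {ω' | Z ω' ≤ 2 * lam * c - Real.log k} := by
    ext ω'
    rw [mem_preimage, mem_Iic, mem_ofPred_eq, ← mul_add, one_div, inv_mul_le_iff₀ (by positivity),
      le_sub_iff_add_le']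
  rw [map_measureReal_apply (by fun_prop) measurableSet_Iic, hset, Measure.real, hZ, neg_sub,
    sub_eq_add_neg, Real.exp_add, Real.exp_log hk]

/-- Theorem 3 (Day; Gumbel limit for exit through the characteristic boundary `0`):
for `λ > 0`, `q₋ < x₀ < 0`, the law of `τ_ε - (1/λ) ln(1/ε)` conditioned on exit at `0`
converges weakly, as `ε → 0⁺`, to the law of `(1/(2λ)) ln(x₀² λ) + (1/(2λ)) Z` with `Z`
standard Gumbel. -/
theorem gumbel_limit_exit_at_zero
    {Ω : Type*} [MeasurableSpace Ω] (P : Measure Ω) [IsProbabilityMeasure P]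
    (hPc : P.IsComplete)
    (B : ℝ → Ω → ℝ) (hB : IsBrownianMotion P B)
    (lam qm x₀ : ℝ) (hlam : 0 < lam) (hqm : qm < x₀) (hx₀ : x₀ < 0)
    (X : ℝ → ℝ → Ω → ℝ)
    (hX : ∀ ε t ω, X ε t ω
      = Real.exp (lam * t) * (x₀ + ε * B ((1 - Real.exp (-(2 * lam * t))) / (2 * lam)) ω))
    (τ : ℝ → Ω → ℝ)
    (hτ : ∀ ε ω, τ ε ω = sInf {t | 0 ≤ t ∧ (X ε t ω = qm ∨ X ε t ω = 0)})
    (C : ℝ → Set Ω)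
    (hC : ∀ ε, C ε
      = {ω | {t | 0 ≤ t ∧ (X ε t ω = qm ∨ X ε t ω = 0)}.Nonempty ∧ X ε (τ ε ω) ω = 0})
    -- `Z` is a standard Gumbel random variable on an auxiliary probability space
    {Ω' : Type*} [MeasurableSpace Ω'] (P' : Measure Ω') [IsProbabilityMeasure P']
    (Z : Ω' → ℝ) (hZmeas : Measurable Z)
    (hZ : ∀ x : ℝ, (P' {ω' | Z ω' ≤ x}).toReal = Real.exp (-Real.exp (-x))) :
    ∀ f : BoundedContinuousFunction ℝ ℝ,
      Tendsto
        (fun ε : ℝ => ∫ ω, f (τ ε ω - (1 / lam) * Real.log (1 / ε)) ∂(P[|C ε]))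
        (𝓝[>] 0)
        (𝓝 (∫ ω', f ((1 / (2 * lam)) * Real.log (x₀ ^ 2 * lam) + (1 / (2 * lam)) * Z ω') ∂P')) := by
  intro f
  obtain ⟨B', hB', hae⟩ := hB.exists_isRegularBrownianMotion
  have hk : 0 < x₀ ^ 2 * lam := mul_pos (by nlinarith) hlam
  have hZ' : Measurable fun ω' =>
      1 / (2 * lam) * Real.log (x₀ ^ 2 * lam) + 1 / (2 * lam) * Z ω' := by
    fun_prop
  have := Measure.isProbabilityMeasure_map (μ := P') hZ'.aemeasurable
  have key := tendsto_integral_cond_exitsAtZero hB' hlam hqm hx₀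
    (measureReal_map_affine_gumbel hZmeas hZ hlam hk) f
  rw [integral_map hZ'.aemeasurable f.continuous.aestronglyMeasurable] at key
  have hXpath : ∀ ε t ω, X ε t ω = unstablePath lam x₀ ε (B · ω) t := hX
  have hτexit : ∀ ε ω, τ ε ω = exitTime lam qm x₀ ε (B · ω) := fun ε ω => by
    simp only [hτ, hXpath]
    rfl
  have hCexit : ∀ ε, C ε = {ω | ExitsAtZero lam qm x₀ ε (B · ω)} := fun ε => by
    simp only [hC, hXpath, hτexit]
    rfl
  refine key.congr fun ε => ?_
  have hCae : {ω | ExitsAtZero lam qm x₀ ε (B' · ω)} =ᵐ[P] C ε := by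
    rw [hCexit]
    filter_upwards [hae] with ω hω
    exact propext (exitsAtZero_congr hlam hω)
  rw [cond_congr_set hCae]
  refine integral_congr_ae (cond_absolutelyContinuous.ae_le ?_)
  filter_upwards [hae] with ω hω
  rw [hτexit, exitTime_congr hlam hω]
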